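/- Suppose a PI sequence (h^i)_{i≥0} exists, the detectability assumption holds, the initial stabilizing bound V⁰ ≤ ᾱ_V∘σ holds with ᾱ_V of class K∞, and h* is an admissible globally optimal policy with V* := J(·,h*). Then the sequence of value functions V^i converges monotonically and uniformly on sublevel sets of σ to V*: (i) for every i ≥ 0 and every x, V^{i+1}(x) ≤ V^i(x); (ii) for every Δ > 0 and δ > 0 there exists i* ∈ ℕ such that for every x with σ(x) ≤ Δ and every i ≥ i*, V^i(x) − V*(x) ≤ δ. -/

import Mathlib

/-!
Write `Vⁱ = J(·, hⁱ)`, `V* = J(·, h*)`, and let `φ*` be the optimal closed-loop trajectory from `x`.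

Each `Vⁱ` satisfies `ℓ(x, hⁱ⁺¹ x) + Vⁱ(f(x, hⁱ⁺¹ x)) ≤ Vⁱ(x)` (compare the minimizer with `hⁱ x`), so
telescoping along the closed loop of `hⁱ⁺¹` gives the monotonicity `Vⁱ⁺¹ ≤ Vⁱ`
(`Jcost_le_of_supersolution`). Monotonicity and minimality together give
`Vⁱ⁺¹(x) ≤ ℓ(x, u) + Vⁱ(f(x, u))` for every admissible `u`; with `u = h* x` and induction,
`Vᵏ(x) ≤ Σ_{j<k} ℓ(φ*_j, h* φ*_j) + V⁰(φ*_k) ≤ V*(x) + ᾱ_V(σ(φ*_k))` (`le_sum_add_of_step`).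

Because `Vⁱ` decreases in `i`, it is enough that the optimal trajectory *visits* a small sublevel
set of `σ` once, at a time bounded uniformly over `σ(x) ≤ Δ`; asymptotic stability of the optimal
closed loop is not needed. The bound on the visiting time (`exists_hitting_time`) comes from
detectability: the stage costs along `φ*` have total at most `V*(x) ≤ ᾱ_V(Δ)`, so the
dissipation inequality for `W` cannot lose a fixed amount at every step for too long.
-/

open scoped NNReal ENNReal Topology

noncomputable section

/-- A class-K∞ function on `ℝ≥0 ≃ [0,∞)`: continuous, strictly increasing,
zero at zero, and unbounded. -/
def ClassKInf (α : ℝ≥0 → ℝ≥0) : Prop :=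
  Continuous α ∧ StrictMono α ∧ α 0 = 0 ∧ ∀ M : ℝ≥0, ∃ s : ℝ≥0, M ≤ α s

/-- A class-KL function on `[0,∞) × [0,∞)`. -/
def ClassKL (β : ℝ≥0 → ℝ≥0 → ℝ≥0) : Prop :=
  (∀ t, Continuous fun s => β s t) ∧ (∀ t, Monotone fun s => β s t) ∧
    (∀ t, β 0 t = 0) ∧ (∀ s, Antitone fun t => β s t) ∧
    (∀ s, Filter.Tendsto (fun t => β s t) Filter.atTop (nhds 0))

variable {n m : ℕ}

/-- Closed-loop solution of `x(k+1) = f(x(k), h(x(k)))` from `x`. -/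
def phiCL (f : (Fin n → ℝ) → (Fin m → ℝ) → Fin n → ℝ)
    (h : (Fin n → ℝ) → Fin m → ℝ) (x : Fin n → ℝ) : ℕ → Fin n → ℝ
  | 0 => x
  | k + 1 => f (phiCL f h x k) (h (phiCL f h x k))

/-- Infinite-horizon closed-loop cost `J(x,h)`, valued in `[0,∞]`. -/
def Jcost (f : (Fin n → ℝ) → (Fin m → ℝ) → Fin n → ℝ)
    (ℓ : (Fin n → ℝ) → (Fin m → ℝ) → ℝ≥0)
    (x : Fin n → ℝ) (h : (Fin n → ℝ) → Fin m → ℝ) : ℝ≥0∞ :=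
  ∑' k : ℕ, (ℓ (phiCL f h x k) (h (phiCL f h x k)) : ℝ≥0∞)

/-- Open-loop solution of `x(k+1) = f(x(k), u(k))` from `x`. -/
def phiOL (f : (Fin n → ℝ) → (Fin m → ℝ) → Fin n → ℝ)
    (x : Fin n → ℝ) (u : ℕ → Fin m → ℝ) : ℕ → Fin n → ℝ
  | 0 => x
  | k + 1 => f (phiOL f x u k) (u k)

/-- Infinite-horizon cost of an input sequence, valued in `[0,∞]`. -/
def JcostOL (f : (Fin n → ℝ) → (Fin m → ℝ) → Fin n → ℝ)
    (ℓ : (Fin n → ℝ) → (Fin m → ℝ) → ℝ≥0)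
    (x : Fin n → ℝ) (u : ℕ → Fin m → ℝ) : ℝ≥0∞ :=
  ∑' k : ℕ, (ℓ (phiOL f x u k) (u k) : ℝ≥0∞)

lemma phiCL_shift (f : (Fin n → ℝ) → (Fin m → ℝ) → Fin n → ℝ)
    (h : (Fin n → ℝ) → Fin m → ℝ) (x : Fin n → ℝ) (k : ℕ) :
    phiCL f h x (k + 1) = phiCL f h (f x (h x)) k := by
  induction k with
  | zero => rfl
  | succ k ih =>
    change f (phiCL f h x (k + 1)) (h (phiCL f h x (k + 1))) = _
    rw [ih]
    rfl

lemma Jcost_eq_add (f : (Fin n → ℝ) → (Fin m → ℝ) → Fin n → ℝ)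
    (ℓ : (Fin n → ℝ) → (Fin m → ℝ) → ℝ≥0)
    (h : (Fin n → ℝ) → Fin m → ℝ) (x : Fin n → ℝ) :
    Jcost f ℓ x h = (ℓ x (h x) : ℝ≥0∞) + Jcost f ℓ (f x (h x)) h := by
  unfold Jcost
  rw [tsum_eq_zero_add' ENNReal.summable]
  simp only [phiCL_shift]
  rfl

/-- A nonnegative supersolution of the Bellman equation of the policy `h` dominates its cost. -/
lemma Jcost_le_of_supersolution (f : (Fin n → ℝ) → (Fin m → ℝ) → Fin n → ℝ)
    (ℓ : (Fin n → ℝ) → (Fin m → ℝ) → ℝ≥0)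
    (h : (Fin n → ℝ) → Fin m → ℝ) (V : (Fin n → ℝ) → ℝ≥0∞)
    (hV : ∀ x, (ℓ x (h x) : ℝ≥0∞) + V (f x (h x)) ≤ V x) (x : Fin n → ℝ) :
    Jcost f ℓ x h ≤ V x := by
  have key : ∀ N : ℕ, (∑ k ∈ Finset.range N,
      (ℓ (phiCL f h x k) (h (phiCL f h x k)) : ℝ≥0∞)) + V (phiCL f h x N) ≤ V x := by
    intro N
    induction N with
    | zero => simp [phiCL]
    | succ N ih =>
      rw [Finset.sum_range_succ, add_assoc]
      exact (add_le_add le_rfl (hV _)).trans ih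
  unfold Jcost
  rw [ENNReal.tsum_eq_iSup_nat]
  exact iSup_le fun N => le_self_add.trans (key N)

/-- Iterating a one-step bound `V (i + 1) ≤ ℓ + V i` along the closed loop of `h`. -/
lemma le_sum_add_of_step (f : (Fin n → ℝ) → (Fin m → ℝ) → Fin n → ℝ)
    (ℓ : (Fin n → ℝ) → (Fin m → ℝ) → ℝ≥0)
    (h : (Fin n → ℝ) → Fin m → ℝ) (V : ℕ → (Fin n → ℝ) → ℝ≥0∞)
    (hV : ∀ i x, V (i + 1) x ≤ (ℓ x (h x) : ℝ≥0∞) + V i (f x (h x))) (k : ℕ) :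
    ∀ x, V k x ≤ (∑ j ∈ Finset.range k,
      (ℓ (phiCL f h x j) (h (phiCL f h x j)) : ℝ≥0∞)) + V 0 (phiCL f h x k) := by
  induction k with
  | zero => intro x; simp [phiCL]
  | succ k ih =>
    intro x
    refine (hV k x).trans ?_
    rw [Finset.sum_range_succ']
    simp only [phiCL_shift]
    refine (add_le_add le_rfl (ih (f x (h x)))).trans (le_of_eq ?_)
    change (ℓ x (h x) : ℝ≥0∞) + _ = _ + (ℓ x (h x) : ℝ≥0∞) + _
    ring

lemma phiOL_eq_phiCL (f : (Fin n → ℝ) → (Fin m → ℝ) → Fin n → ℝ)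
    (h : (Fin n → ℝ) → Fin m → ℝ) (x : Fin n → ℝ) (k : ℕ) :
    phiOL f x (fun j => h (phiCL f h x j)) k = phiCL f h x k := by
  induction k with
  | zero => rfl
  | succ k ih => simp only [phiOL, phiCL, ih]

lemma ClassKInf.exists_pos_le {α : ℝ≥0 → ℝ≥0} (hα : ClassKInf α) {η : ℝ≥0} (hη : 0 < η) :
    ∃ s : ℝ≥0, 0 < s ∧ α s ≤ η := by
  obtain ⟨hc, -, h0, -⟩ := hα
  have h1 : ∀ᶠ s in 𝓝 (0 : ℝ≥0), α s < η :=
    hc.continuousAt.eventually (gt_mem_nhds (by rwa [h0]))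
  have h2 : ∀ᶠ s in 𝓝[>] (0 : ℝ≥0), α s < η := h1.filter_mono nhdsWithin_le_nhds
  obtain ⟨s, hs, hs0⟩ := (h2.and self_mem_nhdsWithin).exists
  exact ⟨s, hs0, hs.le⟩

/-- If `w` dissipates at rate `αW (σ k)` up to the supply `χ (l k)`, and the total supply
`∑ l k` is at most `M`, then `σ` drops to `s` before a time depending only on `αW`, `χ`, `s`, `M`
and the bound `B` on `w 0`. -/
lemma exists_hitting_time {αW χ : ℝ≥0 → ℝ≥0} (hαW : ClassKInf αW) (hχ : ClassKInf χ)
    {s : ℝ≥0} (hs : 0 < s) (B M : ℝ≥0) :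
    ∃ N : ℕ, ∀ w σ l : ℕ → ℝ≥0, w 0 ≤ B →
      (∀ k, w (k + 1) + αW (σ k) ≤ w k + χ (l k)) →
      (∀ k, ∑ j ∈ Finset.range k, l j ≤ M) → ∃ k < N, σ k ≤ s := by
  have ha : 0 < αW s := by
    have := hαW.2.1 hs
    rwa [hαW.2.2.1] at this
  obtain ⟨ε, hε, hχε⟩ := hχ.exists_pos_le (half_pos ha)
  set C : ℝ≥0 := χ M / ε with hC
  obtain ⟨N, hN⟩ := exists_nat_gt ((B + C * M) / (αW s / 2))
  refine ⟨N, fun w σ l hw hstep hsum => ?_⟩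
  by_contra! hcon
  have hl : ∀ k, l k ≤ M := fun k =>
    (Finset.single_le_sum (fun _ _ => zero_le) (Finset.self_mem_range_succ k)).trans
      (hsum (k + 1))
  -- Although `χ` need not be linear, on `[0, M]` it lies below an affine function with
  -- constant term half of the dissipation rate `αW s`.
  have hχl : ∀ k, χ (l k) ≤ αW s / 2 + C * l k := by
    intro k
    rcases le_total (l k) ε with h | h
    · exact (hχ.2.1.monotone h).trans (hχε.trans le_self_add)
    · calc χ (l k) ≤ χ M := hχ.2.1.monotone (hl k)
        _ = C * ε := by rw [hC, div_mul_cancel₀ _ hε.ne']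
        _ ≤ C * l k := by gcongr
        _ ≤ _ := le_add_self
  have key : ∀ K ≤ N, (w K : ℝ) + K * (αW s / 2)
      ≤ B + C * ((∑ j ∈ Finset.range K, l j : ℝ≥0) : ℝ) := by
    intro K
    induction K with
    | zero => intro _; simpa using hw
    | succ K ih =>
      intro hK
      have h1 := ih (by omega)
      have h2 : (w (K + 1) : ℝ) + αW (σ K) ≤ w K + χ (l K) := by exact_mod_cast hstep K
      have h3 : (χ (l K) : ℝ) ≤ αW s / 2 + C * l K := by exact_mod_cast hχl K
      have h4 : (αW s : ℝ) ≤ αW (σ K) := by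
        exact_mod_cast hαW.2.1.monotone (hcon K (by omega)).le
      rw [Finset.sum_range_succ]
      push_cast at h1 ⊢
      linarith
  have h1 := key N le_rfl
  have h2 : (C : ℝ) * ((∑ j ∈ Finset.range N, l j : ℝ≥0) : ℝ) ≤ C * M := by
    gcongr
    exact hsum N
  have h3 : B + C * M < N * (αW s / 2) := (div_lt_iff₀ (half_pos ha)).1 hN
  have h4 : (B : ℝ) + C * M < N * (αW s / 2) := by exact_mod_cast h3
  have h5 : (0 : ℝ) ≤ w N := (w N).2
  linarith

/-- the PI value functions converge monotonically to `V*`,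
uniformly on sublevel sets of `σ`. -/
theorem pi_monotone_uniform_convergence
    (f : (Fin n → ℝ) → (Fin m → ℝ) → Fin n → ℝ)
    (ℓ : (Fin n → ℝ) → (Fin m → ℝ) → ℝ≥0)
    (Uset : (Fin n → ℝ) → Set (Fin m → ℝ))
    (hUne : ∀ x, (Uset x).Nonempty)
    (σ : (Fin n → ℝ) → ℝ≥0) (hσ : Continuous σ)
    -- PI sequence: admissible policies, each `h^{i+1}(x)` minimizing
    -- `u ↦ ℓ(x,u) + Vⁱ(f(x,u))` over `U(x)` with `Vⁱ = J(·, hⁱ)`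
    (hseq : ℕ → (Fin n → ℝ) → Fin m → ℝ)
    (hadm : ∀ i x, hseq i x ∈ Uset x)
    (hPI : ∀ i x, ∀ u ∈ Uset x,
      (ℓ x (hseq (i + 1) x) : ℝ≥0∞) + Jcost f ℓ (f x (hseq (i + 1) x)) (hseq i)
        ≤ (ℓ x u : ℝ≥0∞) + Jcost f ℓ (f x u) (hseq i))
    -- detectability assumption
    (W : (Fin n → ℝ) → ℝ≥0) (hWcont : Continuous W)
    (alphaW chiW : ℝ≥0 → ℝ≥0) (halphaW : ClassKInf alphaW) (hchiW : ClassKInf chiW)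
    (alphaWbar : ℝ≥0 → ℝ≥0) (halphaWbar_cont : Continuous alphaWbar)
    (halphaWbar_mono : Monotone alphaWbar) (halphaWbar_zero : alphaWbar 0 = 0)
    (hdet1 : ∀ x, W x ≤ alphaWbar (σ x))
    (hdet2 : ∀ x, ∀ u ∈ Uset x, W (f x u) + alphaW (σ x) ≤ W x + chiW (ℓ x u))
    -- initial stabilizing bound `V⁰ ≤ ᾱ_V ∘ σ`
    (alphaV : ℝ≥0 → ℝ≥0) (halphaV : ClassKInf alphaV)
    (hV0 : ∀ x, Jcost f ℓ x (hseq 0) ≤ (alphaV (σ x) : ℝ≥0∞))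
    -- `h*` : admissible globally optimal policy
    (hstar : (Fin n → ℝ) → Fin m → ℝ)
    (hstar_adm : ∀ x, hstar x ∈ Uset x)
    (hstar_fin : ∀ x, Jcost f ℓ x hstar < ⊤)
    (hstar_opt : ∀ (x : Fin n → ℝ) (u : ℕ → Fin m → ℝ),
      (∀ k, u k ∈ Uset (phiOL f x u k)) → Jcost f ℓ x hstar ≤ JcostOL f ℓ x u) :
    (∀ (i : ℕ) (x : Fin n → ℝ),
        Jcost f ℓ x (hseq (i + 1)) ≤ Jcost f ℓ x (hseq i)) ∧
    (∀ Δ δ : ℝ≥0, 0 < Δ → 0 < δ → ∃ istar : ℕ,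
        ∀ x : Fin n → ℝ, σ x ≤ Δ → ∀ i ≥ istar,
          Jcost f ℓ x (hseq i) - Jcost f ℓ x hstar ≤ (δ : ℝ≥0∞)) := by
  have hmono : ∀ (i : ℕ) (x : Fin n → ℝ),
      Jcost f ℓ x (hseq (i + 1)) ≤ Jcost f ℓ x (hseq i) := by
    intro i
    refine Jcost_le_of_supersolution f ℓ _ (fun x => Jcost f ℓ x (hseq i)) fun x => ?_
    rw [Jcost_eq_add f ℓ (hseq i) x]
    exact hPI i x _ (hadm i x)
  refine ⟨hmono, fun Δ δ _ hδ => ?_⟩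
  have hanti : ∀ x, Antitone fun i => Jcost f ℓ x (hseq i) := fun x =>
    antitone_nat_of_succ_le fun i => hmono i x
  have hstep : ∀ i x, Jcost f ℓ x (hseq (i + 1))
      ≤ (ℓ x (hstar x) : ℝ≥0∞) + Jcost f ℓ (f x (hstar x)) (hseq i) := by
    intro i x
    rw [Jcost_eq_add f ℓ (hseq (i + 1)) x]
    exact (add_le_add le_rfl (hmono i _)).trans (hPI i x _ (hstar_adm x))
  have hbound : ∀ x, Jcost f ℓ x hstar ≤ alphaV (σ x) := by
    intro x
    refine (hstar_opt x (fun j => hseq 0 (phiCL f (hseq 0) x j)) fun k => ?_).trans ?_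
    · rw [phiOL_eq_phiCL]
      exact hadm 0 _
    · unfold JcostOL
      simp only [phiOL_eq_phiCL]
      exact hV0 x
  obtain ⟨s, hs, hsδ⟩ := halphaV.exists_pos_le hδ
  obtain ⟨N, hN⟩ := exists_hitting_time halphaW hchiW hs (alphaWbar Δ) (alphaV Δ)
  refine ⟨N, fun x hx i hi => ?_⟩
  have hpartial : ∀ k, (∑ j ∈ Finset.range k,
      (ℓ (phiCL f hstar x j) (hstar (phiCL f hstar x j)) : ℝ≥0∞)) ≤ Jcost f ℓ x hstar :=
    fun k => ENNReal.sum_le_tsum _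
  obtain ⟨k, hkN, hk⟩ := hN (fun k => W (phiCL f hstar x k)) (fun k => σ (phiCL f hstar x k))
    (fun k => ℓ (phiCL f hstar x k) (hstar (phiCL f hstar x k)))
    ((hdet1 x).trans (halphaWbar_mono hx))
    (fun k => hdet2 _ _ (hstar_adm _))
    (fun k => by
      have h1 := (hpartial k).trans (hbound x)
      have h2 : alphaV (σ x) ≤ alphaV Δ := halphaV.2.1.monotone hx
      exact le_trans (by exact_mod_cast h1) h2)
  rw [tsub_le_iff_left]
  calc Jcost f ℓ x (hseq i) ≤ Jcost f ℓ x (hseq k) := hanti x (hkN.le.trans hi)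
    _ ≤ _ := le_sum_add_of_step f ℓ hstar (fun i x => Jcost f ℓ x (hseq i)) hstep k x
    _ ≤ Jcost f ℓ x hstar + δ := by
      refine add_le_add (hpartial k) ((hV0 _).trans ?_)
      exact_mod_cast (halphaV.2.1.monotone hk).trans hsδ

end
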